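/- arXiv:1509.06771 — 2 statements merged into one kernel-verified Lean document; each statement's English description precedes it below -/
import Mathlib

section
/- Let n ≥ 3 and let G be a finite subgroup of SO(n) generated by elements each of which fixes some point of the unit sphere S^{n−1} (i.e. each generator has a nonzero fixed vector in ℝⁿ). Then the orbit space S^{n−1}/G, equipped with the quotient topology, is simply connected. -/
open Metric

noncomputable section

/-- Euclidean `n`-space. -/
abbrev Euc (n : ℕ) := EuclideanSpace ℝ (Fin n)

/-- The orthogonal group `O(n)`, realized as the group of linear isometric
self-equivalences of Euclidean `n`-space. -/
abbrev Orth (n : ℕ) := Euc n ≃ₗᵢ[ℝ] Euc n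

instance {n : ℕ} : MulAction (Orth n) (Euc n) where
  smul g x := g x
  one_smul _ := rfl
  mul_smul _ _ _ := rfl

instance {n : ℕ} : MulAction (Orth n) (sphere (0 : Euc n) 1) where
  smul g x := ⟨g x, by
    have hx := x.2
    simp only [mem_sphere_iff_norm, sub_zero] at hx ⊢
    rw [g.norm_map]; exact hx⟩
  one_smul x := Subtype.ext rfl
  mul_smul _ _ _ := Subtype.ext rfl

/-- The fixed-point subspace `{v : gv = v}` of an orthogonal transformation. -/
def fixedSubspace {n : ℕ} (g : Orth n) : Submodule ℝ (Euc n) :=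
  LinearMap.ker ((g.toLinearEquiv : Euc n →ₗ[ℝ] Euc n) - LinearMap.id)

/-- A reflection: an orthogonal transformation whose fixed-point subspace has
dimension `n - 1` (codimension one). -/
def IsReflection {n : ℕ} (g : Orth n) : Prop :=
  Module.finrank ℝ (fixedSubspace g) + 1 = n

/-- A rotation: an orthogonal transformation whose fixed-point subspace has
dimension `n - 2` (codimension two). -/
def IsRotation {n : ℕ} (g : Orth n) : Prop :=
  Module.finrank ℝ (fixedSubspace g) + 2 = n

/-!
Paths in the orbit space lift to the sphere up to homotopy, because a small spherical cap centred at
`x` contracts onto `x` along great circles and this contraction descends to the image of the cap in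
the orbit space. Lifting two paths with common endpoints from the same initial point gives final
points of the form `y` and `g • y`. If `g` fixes a point `v`, then, as the sphere is simply
connected, the lifts are homotopic to `α · β` and `α · gβ`, where `β` runs from `v` to `y`, and
these have the same projection. The set of `g` for which the two projections are always homotopic is
a subgroup, so it is all of `G`.
-/

open Topology unitInterval InnerProductSpace

section Paths

variable {X : Type*} [TopologicalSpace X]

theorem path_induction_of_nhds {P : ∀ ⦃a b : X⦄, Path a b → Prop}
    (homotopic : ∀ ⦃a b⦄ ⦃p q : Path a b⦄, p.Homotopic q → P p → P q)
    (trans : ∀ ⦃a b c⦄ (p : Path a b) (q : Path b c), P p → P q → P (p.trans q))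
    (small : ∀ x, ∃ V ∈ 𝓝 x, ∀ ⦃a b⦄ (p : Path a b), (∀ t, p t ∈ V) → P p)
    {a b : X} (p : Path a b) : P p := by
  choose V hV hPV using small
  obtain ⟨t, ht0, ht_mono, ⟨N, htN⟩, ht_cover⟩ :=
    exists_monotone_Icc_subset_open_cover_unitInterval
      (fun x ↦ isOpen_interior.preimage p.continuous)
      (fun s _ ↦ Set.mem_iUnion.2 ⟨p s, mem_interior_iff_mem_nhds.2 (hV (p s))⟩)
  have piece (n : ℕ) : P (p.subpath (t n) (t (n + 1))) := by
    obtain ⟨x, hx⟩ := ht_cover n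
    refine hPV x _ fun s ↦ interior_subset ?_
    have hs := Set.mem_range_self (f := p.subpath (t n) (t (n + 1))) s
    rw [Path.range_subpath_of_le _ _ _ (ht_mono n.le_succ)] at hs
    exact Set.image_subset_iff.2 hx hs
  have initial (n : ℕ) : P (p.subpath (t 0) (t n)) := by
    induction n with
    | zero =>
      rw [Path.subpath_self]
      exact hPV _ _ fun _ ↦ mem_of_mem_nhds (hV _)
    | succ n ih =>
      exact homotopic ⟨Path.Homotopy.subpathTransSubpath p _ _ _⟩ (trans _ _ ih (piece n))
  have uncast {x y : X} {hx : x = a} {hy : y = b} (h : P (p.cast hx hy)) : P p := by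
    subst hx hy
    exact h
  have whole := initial N
  rw [ht0, htN N le_rfl, Path.subpath_zero_one] at whole
  exact uncast whole

theorem homotopic_cast {a b a' b' : X} {p q : Path a b} (h : p.Homotopic q) (ha : a' = a)
    (hb : b' = b) : (p.cast ha hb).Homotopic (q.cast ha hb) := by
  subst ha hb
  exact h

theorem homotopic_of_forall_mem_isSimplyConnected {s : Set X} (hs : IsSimplyConnected s) {a b : X}
    {p q : Path a b} (hp : ∀ t, p t ∈ s) (hq : ∀ t, q t ∈ s) : p.Homotopic q := by
  have := hs.simplyConnectedSpace
  lift a to s using by simpa using hp 0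
  lift b to s using by simpa using hp 1
  let corestrict (r : Path (a : X) b) (hr : ∀ t, r t ∈ s) : Path a b :=
    { toFun := fun t ↦ ⟨r t, hr t⟩
      source' := by simp
      target' := by simp }
  exact (SimplyConnectedSpace.paths_homotopic (corestrict p hp) (corestrict q hq)).map
    ⟨Subtype.val, continuous_subtype_val⟩

theorem homotopic_of_isPathConnected_inter {s t : Set X} (hs : IsSimplyConnected s)
    (ht : IsSimplyConnected t) (hst : IsPathConnected (s ∩ t)) {a b : X} {p q : Path a b}
    (hp : ∀ u, p u ∈ s) (hq : ∀ u, q u ∈ t) : p.Homotopic q := by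
  have ha : a ∈ s ∩ t := ⟨by simpa using hp 0, by simpa using hq 0⟩
  have hb : b ∈ s ∩ t := ⟨by simpa using hp 1, by simpa using hq 1⟩
  obtain ⟨r, hr⟩ := hst.joinedIn a ha b hb
  exact (homotopic_of_forall_mem_isSimplyConnected hs hp fun u ↦ (hr u).1).trans
    (homotopic_of_forall_mem_isSimplyConnected ht (fun u ↦ (hr u).2) hq)

theorem trans_apply_mem {a b c : X} {s : Set X} {p : Path a b} {q : Path b c}
    (hp : ∀ t, p t ∈ s) (hq : ∀ t, q t ∈ s) (t : I) : p.trans q t ∈ s := by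
  rw [Path.trans_apply]
  split_ifs
  exacts [hp _, hq _]

theorem homotopic_of_trans_homotopic_trans {a b c : X} {α : Path a b} {p q : Path b c}
    (h : (α.trans p).Homotopic (α.trans q)) : p.Homotopic q := by
  simp only [← Path.Homotopic.Quotient.eq, Path.Homotopic.Quotient.mk_trans] at h ⊢
  simpa [← Path.Homotopic.Quotient.trans_assoc] using
    congrArg (Path.Homotopic.Quotient.trans (Path.Homotopic.Quotient.mk α).symm) h

theorem simplyConnectedSpace_of_isOpen_cover {ι : Type*} {U : ι → Set X} {x₀ : X}
    (hopen : ∀ i, IsOpen (U i)) (hcover : ∀ x, ∃ i, x ∈ U i) (hx₀ : ∀ i, x₀ ∈ U i)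
    (hsc : ∀ i, IsSimplyConnected (U i)) (hinter : ∀ i j, IsPathConnected (U i ∩ U j)) :
    SimplyConnectedSpace X := by
  have spoke {i : ι} {x : X} (hx : x ∈ U i) : JoinedIn (U i) x₀ x :=
    (hsc i).isPathConnected.joinedIn _ (hx₀ i) _ hx
  have triangle {a b : X} (p : Path a b) : ∀ ⦃i j⦄ ⦃α : Path x₀ a⦄ ⦃β : Path x₀ b⦄,
      (∀ t, α t ∈ U i) → (∀ t, β t ∈ U j) → (α.trans p).Homotopic β := by
    induction p using path_induction_of_nhds with
    | homotopic hpq ih =>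
      intro i j α β hα hβ
      exact ((Path.Homotopic.refl α).hcomp hpq.symm).trans (ih hα hβ)
    | @trans _ b _ p q ihp ihq =>
      intro i j α γ hα hγ
      obtain ⟨k, hk⟩ := hcover b
      obtain ⟨β, hβ⟩ := spoke hk
      exact ((Path.Homotopic.trans_assoc α p q).symm.trans ((ihp hα hβ).hcomp (.refl q))).trans
        (ihq hβ hγ)
    | small x =>
      obtain ⟨k, hk⟩ := hcover x
      refine ⟨U k, (hopen k).mem_nhds hk, fun a b p hp i j α β hα hβ ↦ ?_⟩
      obtain ⟨α', hα'⟩ := spoke (by simpa using hp 0 : a ∈ U k)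
      have hαα' : α.Homotopic α' :=
        homotopic_of_isPathConnected_inter (hsc i) (hsc k) (hinter i k) hα hα'
      have hα'p : (α'.trans p).Homotopic β :=
        homotopic_of_isPathConnected_inter (hsc k) (hsc j) (hinter k j) (trans_apply_mem hα' hp) hβ
      exact (hαα'.hcomp (.refl p)).trans hα'p
  refine simply_connected_iff_paths_homotopic'.2 ⟨?_, fun {a b} p q ↦ ?_⟩
  · refine (pathConnectedSpace_iff_eq (X := X)).2 ⟨x₀, Set.eq_univ_of_forall fun x ↦ ?_⟩
    obtain ⟨i, hi⟩ := hcover x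
    exact (spoke hi).joined
  · obtain ⟨i, hi⟩ := hcover a
    obtain ⟨j, hj⟩ := hcover b
    obtain ⟨α, hα⟩ := spoke hi
    obtain ⟨β, hβ⟩ := spoke hj
    exact homotopic_of_trans_homotopic_trans ((triangle p hα hβ).trans (triangle q hα hβ).symm)

theorem contractibleSpace_of_isQuotientMap {Y : Type*} [TopologicalSpace Y] {f : X → Y}
    (hf : IsQuotientMap f) {x₀ : X}
    (H : (ContinuousMap.id X).Homotopy (ContinuousMap.const X x₀))
    (hH : ∀ t x x', f x = f x' → f (H (t, x)) = f (H (t, x'))) : ContractibleSpace Y := by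
  have section_apply (y : Y) : f (Function.surjInv hf.surjective y) = y :=
    Function.surjInv_eq hf.surjective y
  let K : I × Y → Y := fun z ↦ f (H (z.1, Function.surjInv hf.surjective z.2))
  have hK (t : I) (x : X) : K (t, f x) = f (H (t, x)) := hH _ _ _ (section_apply _)
  have hK_cont : Continuous K := by
    refine hf.continuous_lift_prod_right ?_
    simp only [hK]
    exact hf.continuous.comp H.continuous
  rw [contractible_iff_id_nullhomotopic]
  exact ⟨f x₀, ⟨⟨⟨K, hK_cont⟩, fun y ↦ by simp [K, section_apply], fun y ↦ by simp [K]⟩⟩⟩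

end Paths

section OrbitSpace

variable {G X : Type*} [Group G] [TopologicalSpace X] [MulAction G X]

variable (G X) in
/-- The projection of `X` onto its orbit space, as a continuous map. -/
def orbitMap : C(X, Quotient (MulAction.orbitRel G X)) where
  toFun := Quotient.mk _
  continuous_toFun := continuous_quotient_mk'

theorem orbitMap_eq_orbitMap_iff {x y : X} :
    orbitMap G X x = orbitMap G X y ↔ ∃ g : G, g • y = x :=
  Quotient.eq

theorem orbitMap_smul (g : G) (x : X) : orbitMap G X (g • x) = orbitMap G X x :=
  orbitMap_eq_orbitMap_iff.2 ⟨g, rfl⟩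

variable [ContinuousConstSMul G X]

theorem isOpenQuotientMap_orbitMap : IsOpenQuotientMap (orbitMap G X) :=
  MulAction.isOpenQuotientMap_quotientMk

theorem exists_path_homotopic_map_orbitMap
    (hloc : ∀ x : X, ∃ U ∈ 𝓝 x, IsPathConnected U ∧ IsSimplyConnected (orbitMap G X '' U))
    {a b : Quotient (MulAction.orbitRel G X)} (p : Path a b) :
    ∀ ⦃x : X⦄ (hx : a = orbitMap G X x), ∃ (y : X) (hy : b = orbitMap G X y) (γ : Path x y),
      p.Homotopic ((γ.map (orbitMap G X).continuous).cast hx hy) := by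
  induction p using path_induction_of_nhds with
  | homotopic hpq ih =>
    intro x hx
    obtain ⟨y, hy, γ, hγ⟩ := ih hx
    exact ⟨y, hy, γ, hpq.symm.trans hγ⟩
  | trans p q ihp ihq =>
    intro x hx
    obtain ⟨y, rfl, γ, hγ⟩ := ihp hx
    obtain ⟨z, rfl, δ, hδ⟩ := ihq rfl
    subst hx
    refine ⟨z, rfl, γ.trans δ, ?_⟩
    simpa using hγ.hcomp hδ
  | small a =>
    obtain ⟨x, rfl⟩ := isOpenQuotientMap_orbitMap.surjective a
    obtain ⟨U, hxU, hU, hU'⟩ := hloc x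
    refine ⟨orbitMap G X '' U, isOpenQuotientMap_orbitMap.isOpenMap.image_mem_nhds hxU, ?_⟩
    rintro b c p hp y rfl
    obtain ⟨u, hu, hub⟩ : orbitMap G X y ∈ orbitMap G X '' U := by simpa using hp 0
    obtain ⟨v, hv, rfl⟩ : c ∈ orbitMap G X '' U := by simpa using hp 1
    obtain ⟨g, rfl⟩ := orbitMap_eq_orbitMap_iff.1 hub.symm
    obtain ⟨γ, hγ⟩ := hU.joinedIn u hu v hv
    refine ⟨g • v, (orbitMap_smul g v).symm, γ.map (continuous_const_smul g),
      homotopic_of_forall_mem_isSimplyConnected hU' hp fun t ↦ ⟨γ t, hγ t, ?_⟩⟩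
    exact (orbitMap_smul g (γ t)).symm

theorem map_orbitMap_homotopic_of_mem_closure [SimplyConnectedSpace X] {g : G}
    (hg : g ∈ Subgroup.closure {g : G | ∃ x : X, g • x = x}) :
    ∀ ⦃x y z : X⦄ (γ : Path x y) (δ : Path x z) (h : orbitMap G X y = orbitMap G X z),
      g • y = z → (γ.map (orbitMap G X).continuous).Homotopic
        ((δ.map (orbitMap G X).continuous).cast rfl h) := by
  induction hg using Subgroup.closure_induction with
  | mem g hg =>
    rintro x y _ γ δ h rfl
    obtain ⟨v, hv⟩ := hg
    let α : Path x v := PathConnectedSpace.somePath x v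
    let β : Path v y := PathConnectedSpace.somePath v y
    let gβ : Path v (g • y) := (β.map (continuous_const_smul g)).cast hv.symm rfl
    have hβ : β.map (orbitMap G X).continuous = (gβ.map (orbitMap G X).continuous).cast rfl h :=
      Path.ext (funext fun t ↦ (orbitMap_smul g (β t)).symm)
    have hγ : γ.Homotopic (α.trans β) := SimplyConnectedSpace.paths_homotopic _ _
    have hδ : (α.trans gβ).Homotopic δ := SimplyConnectedSpace.paths_homotopic _ _
    have hαβ : (α.trans β).map (orbitMap G X).continuous =
        ((α.trans gβ).map (orbitMap G X).continuous).cast rfl h := by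
      rw [Path.map_trans, Path.map_trans, hβ, Path.cast_trans]
      rfl
    exact (hγ.map (orbitMap G X)).trans (hαβ ▸ homotopic_cast (hδ.map (orbitMap G X)) rfl h)
  | one =>
    intro x y z γ δ h hyz
    obtain rfl : y = z := by rw [← hyz, one_smul]
    exact (SimplyConnectedSpace.paths_homotopic γ δ).map (orbitMap G X)
  | mul g k _ _ ihg ihk =>
    rintro x y _ γ δ h rfl
    let η : Path x (k • y) := PathConnectedSpace.somePath _ _
    have hη := orbitMap_smul k y
    exact (ihk γ η hη.symm rfl).trans
      (homotopic_cast (ihg η δ (hη.trans h) (mul_smul g k y).symm) rfl hη.symm)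
  | inv g _ ih =>
    rintro x y _ γ δ h rfl
    exact (homotopic_cast (ih δ γ h.symm (smul_inv_smul g y)) rfl h).symm

theorem simplyConnectedSpace_quotient_orbitRel [SimplyConnectedSpace X]
    (hloc : ∀ x : X, ∃ U ∈ 𝓝 x, IsPathConnected U ∧ IsSimplyConnected (orbitMap G X '' U))
    (hgen : Subgroup.closure {g : G | ∃ x : X, g • x = x} = ⊤) :
    SimplyConnectedSpace (Quotient (MulAction.orbitRel G X)) := by
  refine simply_connected_iff_paths_homotopic'.2
    ⟨isOpenQuotientMap_orbitMap.surjective.pathConnectedSpace (orbitMap G X).continuous, ?_⟩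
  intro a b p q
  obtain ⟨x, rfl⟩ := isOpenQuotientMap_orbitMap.surjective a
  obtain ⟨y, rfl, γ, hγ⟩ := exists_path_homotopic_map_orbitMap hloc p rfl
  obtain ⟨z, hyz, δ, hδ⟩ := exists_path_homotopic_map_orbitMap hloc q rfl
  obtain ⟨g, hg⟩ := orbitMap_eq_orbitMap_iff.1 hyz.symm
  have hγδ := map_orbitMap_homotopic_of_mem_closure (hgen ▸ Subgroup.mem_top g) γ δ hyz hg
  exact (hγ.trans hγδ).trans hδ.symm

end OrbitSpace

theorem one_lt_rank_quotient_span_singleton {K V : Type*} [DivisionRing K] [AddCommGroup V]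
    [Module K V] (hV : 2 < Module.rank K V) (v : V) :
    1 < Module.rank K (V ⧸ Submodule.span K {v}) := by
  by_contra! h
  have hspan : Module.rank K (Submodule.span K {v}) ≤ 1 := by simpa using rank_span_le (R := K) {v}
  refine hV.not_ge ?_
  rw [← Submodule.rank_quotient_add_rank (Submodule.span K {v}), ← one_add_one_eq_two]
  gcongr

section Sphere

open NormedSpace (norm_normalize_eq_one_iff normalize_eq_self_of_norm_eq_one
  normalize_smul_of_pos)
open Set

variable {E : Type*} [NormedAddCommGroup E] [InnerProductSpace ℝ E]
  {x u v w : sphere (0 : E) 1} {c : ℝ}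

/-- The open spherical cap with centre `x` and height parameter `c`: a small cap for `c` close
to `1`, the sphere punctured at `-x` for `c = -1`. -/
def sphericalCap (x : sphere (0 : E) 1) (c : ℝ) : Set (sphere (0 : E) 1) :=
  {u | c < ⟪(x : E), u⟫_ℝ}

theorem isOpen_sphericalCap (x : sphere (0 : E) 1) (c : ℝ) : IsOpen (sphericalCap x c) :=
  isOpen_lt continuous_const (by fun_prop)

theorem mem_sphericalCap_self (hc : c < 1) : x ∈ sphericalCap x c := by
  simpa [sphericalCap] using hc

theorem mul_norm_lt_inner_of_mem_sphericalCap (hc : c ∈ Ico (-1) 1) (hu : u ∈ sphericalCap x c)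
    (t : I) : c * ‖(1 - t : ℝ) • (u : E) + (t : ℝ) • (x : E)‖ <
      ⟪(x : E), (1 - t : ℝ) • (u : E) + (t : ℝ) • (x : E)⟫_ℝ := by
  set w : E := (1 - t : ℝ) • (u : E) + (t : ℝ) • (x : E) with hw
  have ht₀ := t.2.1
  have ht₁ := t.2.2
  have hinner : ⟪(x : E), w⟫_ℝ = (1 - t) * ⟪(x : E), u⟫_ℝ + t := by
    simp [hw, inner_add_right, inner_smul_right]
  have hnorm : |‖w‖ - (1 - t)| ≤ t := by
    have := abs_norm_sub_norm_le w ((1 - t : ℝ) • (u : E))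
    simpa [hw, norm_smul, abs_of_nonneg ht₀, abs_of_nonneg (sub_nonneg.2 ht₁)] using this
  have hle : c * (‖w‖ - (1 - t)) ≤ t := calc
    c * (‖w‖ - (1 - t)) ≤ |c * (‖w‖ - (1 - t))| := le_abs_self _
    _ = |c| * |‖w‖ - (1 - t)| := abs_mul _ _
    _ ≤ 1 * t := mul_le_mul (abs_le.2 ⟨hc.1, hc.2.le⟩) hnorm (abs_nonneg _) zero_le_one
    _ = t := one_mul _
  rcases ht₁.eq_or_lt with ht | ht
  · simpa [hw, ht] using hc.2
  · have hcap : (1 - t) * c < (1 - t) * ⟪(x : E), u⟫_ℝ :=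
      mul_lt_mul_of_pos_left hu (sub_pos.2 ht)
    linarith

/-- The contraction of a spherical cap onto its centre along great circles, obtained by normalizing
the straight-line contraction. -/
def sphericalCapContraction (x : sphere (0 : E) 1) (hc : c ∈ Ico (-1) 1) :
    (ContinuousMap.id (sphericalCap x c)).Homotopy
      (ContinuousMap.const _ ⟨x, mem_sphericalCap_self hc.2⟩) where
  toFun z :=
    have hw := mul_norm_lt_inner_of_mem_sphericalCap hc z.2.2 z.1
    have hw₀ : (1 - z.1 : ℝ) • (z.2 : E) + (z.1 : ℝ) • (x : E) ≠ 0 := fun h ↦ by simp [h] at hw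
    ⟨⟨NormedSpace.normalize ((1 - z.1 : ℝ) • (z.2 : E) + (z.1 : ℝ) • (x : E)),
      mem_sphere_zero_iff_norm.2 (norm_normalize_eq_one_iff.2 hw₀)⟩, by
      change c < ⟪(x : E), NormedSpace.normalize _⟫_ℝ
      rw [NormedSpace.normalize, inner_smul_right, ← div_eq_inv_mul,
        lt_div_iff₀ (norm_pos_iff.2 hw₀)]
      exact hw⟩
  continuous_toFun := by
    refine .subtype_mk (.subtype_mk (.smul (.inv₀ (by fun_prop) fun z ↦ ?_) (by fun_prop)) _) _
    have hw := mul_norm_lt_inner_of_mem_sphericalCap hc z.2.2 z.1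
    exact norm_ne_zero_iff.2 fun h ↦ by simp [h] at hw
  map_zero_left u := by ext; simp [normalize_eq_self_of_norm_eq_one]
  map_one_left u := by ext; simp [normalize_eq_self_of_norm_eq_one]

theorem coe_sphericalCapContraction (hc : c ∈ Ico (-1) 1) (t : I) (u : sphericalCap x c) :
    (sphericalCapContraction x hc (t, u) : E) =
      NormedSpace.normalize ((1 - t : ℝ) • (u : E) + (t : ℝ) • (x : E)) :=
  rfl

theorem contractibleSpace_sphericalCap (hc : c ∈ Ico (-1) 1) :
    ContractibleSpace (sphericalCap x c) :=
  (contractible_iff_id_nullhomotopic _).2 ⟨_, ⟨sphericalCapContraction x hc⟩⟩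

theorem isSimplyConnected_sphericalCap (hc : c ∈ Ico (-1) 1) :
    IsSimplyConnected (sphericalCap x c) :=
  have := contractibleSpace_sphericalCap (x := x) hc
  SimplyConnectedSpace.ofContractible _

theorem mem_sphericalCap_inter_neg_iff :
    u ∈ sphericalCap x (-1) ∩ sphericalCap (-x) (-1) ↔ (u : E) ∉ Submodule.span ℝ {(x : E)} := by
  have hle : |⟪(x : E), u⟫_ℝ| ≤ 1 := by simpa using abs_real_inner_le_norm (x : E) u
  have heq : |⟪(x : E), u⟫_ℝ| = 1 ↔ (u : E) ∈ Submodule.span ℝ {(x : E)} := by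
    have := abs_real_inner_div_norm_mul_norm_eq_one_iff (x : E) u
    simp only [norm_eq_of_mem_sphere, mul_one, div_one] at this
    rw [this, Submodule.mem_span_singleton]
    refine ⟨fun ⟨_, r, _, hr⟩ ↦ ⟨r, hr.symm⟩,
      fun ⟨r, hr⟩ ↦ ⟨ne_zero_of_mem_unit_sphere x, r, ?_, hr.symm⟩⟩
    rintro rfl
    exact ne_zero_of_mem_unit_sphere u (by simp [← hr])
  rw [← heq, ← ne_eq, ← hle.lt_iff_ne, abs_lt]
  simp [sphericalCap]

theorem isPathConnected_sphericalCap_inter_neg (hE : 2 < Module.rank ℝ E)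
    (x : sphere (0 : E) 1) :
    IsPathConnected (sphericalCap x (-1) ∩ sphericalCap (-x) (-1)) := by
  let S := Submodule.span ℝ {(x : E)}
  have himage : ((↑) : sphere (0 : E) 1 → E) '' (sphericalCap x (-1) ∩ sphericalCap (-x) (-1)) =
      NormedSpace.normalize '' (S : Set E)ᶜ := by
    ext w
    constructor
    · rintro ⟨u, hu, rfl⟩
      exact ⟨u, mem_sphericalCap_inter_neg_iff.1 hu, normalize_eq_self_of_norm_eq_one (by simp)⟩
    · rintro ⟨v, hv, rfl⟩
      have hv₀ : v ≠ 0 := fun h ↦ hv (by simp [h])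
      refine ⟨⟨NormedSpace.normalize v, by simpa using hv₀⟩,
        mem_sphericalCap_inter_neg_iff.2 fun h ↦ hv ?_, rfl⟩
      exact (S.smul_mem_iff (inv_ne_zero (norm_ne_zero_iff.2 hv₀))).1 h
  rw [IsInducing.subtypeVal.isPathConnected_iff, himage]
  refine (isPathConnected_compl_of_one_lt_codim
    (one_lt_rank_quotient_span_singleton hE (x : E))).image' ?_
  refine .smul (.inv₀ (by fun_prop) fun w hw h ↦ hw ?_) (by fun_prop)
  simp [norm_eq_zero.1 h]

theorem simplyConnectedSpace_sphere (hE : 2 < Module.rank ℝ E) :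
    SimplyConnectedSpace (sphere (0 : E) 1) := by
  have : Nontrivial E := rank_pos_iff_nontrivial.1 (zero_lt_two.trans hE)
  obtain ⟨x⟩ := (NormedSpace.sphere_nonempty (E := E).2 zero_le_one).to_subtype
  have hpair := isPathConnected_sphericalCap_inter_neg hE x
  have hsc (y : sphere (0 : E) 1) : IsSimplyConnected (sphericalCap y (-1)) :=
    isSimplyConnected_sphericalCap (by norm_num)
  obtain ⟨x₀, hx₀⟩ := hpair.nonempty
  refine simplyConnectedSpace_of_isOpen_cover (x₀ := x₀)
    (U := Bool.rec (sphericalCap x (-1)) (sphericalCap (-x) (-1)))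
    (Bool.rec (isOpen_sphericalCap _ _) (isOpen_sphericalCap _ _)) (fun u ↦ ?_)
    (Bool.rec hx₀.1 hx₀.2) (Bool.rec (hsc x) (hsc (-x))) ?_
  · rcases le_total 0 ⟪(x : E), u⟫_ℝ with h | h
    · exact ⟨false, neg_one_lt_zero.trans_le h⟩
    · have hneg : 0 ≤ ⟪((-x : sphere (0 : E) 1) : E), u⟫_ℝ := by simpa using h
      exact ⟨true, neg_one_lt_zero.trans_le hneg⟩
  · rintro (_ | _) (_ | _)
    · simpa using (hsc x).isPathConnected
    · exact hpair
    · rwa [inter_comm]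
    · simpa using (hsc (-x)).isPathConnected

theorem inner_sphere_eq_one_sub_dist_sq_div_two (u v : sphere (0 : E) 1) :
    ⟪(u : E), v⟫_ℝ = 1 - dist u v ^ 2 / 2 := by
  rw [Subtype.dist_eq, dist_eq_norm, norm_sub_sq_real]
  simp only [norm_eq_of_mem_sphere]
  ring

variable {F : Type*} [NormedAddCommGroup F] [InnerProductSpace ℝ F]

theorem inner_map_map_of_isometry_sphere {f : sphere (0 : E) 1 → sphere (0 : F) 1}
    (hf : Isometry f) (u v : sphere (0 : E) 1) : ⟪(f u : F), f v⟫_ℝ = ⟪(u : E), v⟫_ℝ := by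
  simp only [inner_sphere_eq_one_sub_dist_sq_div_two, hf.dist_eq]

theorem map_smul_add_smul_of_isometry_sphere {f : sphere (0 : E) 1 → sphere (0 : F) 1}
    (hf : Isometry f) {a b : ℝ} (hw : (w : E) = a • (u : E) + b • (v : E)) :
    (f w : F) = a • (f u : F) + b • (f v : F) := by
  have hnorm : ‖(f w : F) - (a • (f u : F) + b • (f v : F))‖ ^ 2 =
      ‖(w : E) - (a • (u : E) + b • (v : E))‖ ^ 2 := by
    simp only [← real_inner_self_eq_norm_sq, inner_sub_left, inner_sub_right, inner_add_left,
      inner_add_right, real_inner_smul_left, real_inner_smul_right,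
      inner_map_map_of_isometry_sphere hf]
  rw [hw, sub_self, norm_zero, zero_pow two_ne_zero, sq_eq_zero_iff, norm_eq_zero] at hnorm
  exact sub_eq_zero.1 hnorm

theorem map_sphericalCapContraction_of_isometry {f : sphere (0 : E) 1 → sphere (0 : E) 1}
    (hf : Isometry f) (hx : f x = x) (hc : c ∈ Ico (-1) 1) {u u' : sphericalCap x c}
    (hu : f u = u') (t : I) :
    f (sphericalCapContraction x hc (t, u)) = sphericalCapContraction x hc (t, u') := by
  set w : sphere (0 : E) 1 := ↑(sphericalCapContraction x hc (t, u))
  set m : E := (1 - t : ℝ) • (u : E) + (t : ℝ) • (x : E) with hm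
  have hwm : (w : E) = ‖m‖⁻¹ • m := rfl
  have hfw : (f w : E) = ‖m‖⁻¹ • ((1 - t : ℝ) • (u' : E) + (t : ℝ) • (x : E)) := by
    rw [hm, smul_add, smul_smul, smul_smul] at hwm
    simpa only [hx, hu, smul_add, smul_smul] using map_smul_add_smul_of_isometry_sphere hf hwm
  have hm₀ : 0 < ‖m‖⁻¹ := by
    refine inv_pos.2 (norm_pos_iff.2 fun h ↦ ne_zero_of_mem_unit_sphere w ?_)
    rw [hwm, h, smul_zero]
  ext
  rw [coe_sphericalCapContraction, ← normalize_smul_of_pos hm₀, ← hfw,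
    normalize_eq_self_of_norm_eq_one (norm_eq_of_mem_sphere _)]

variable {G : Type*} [Group G] [MulAction G (sphere (0 : E) 1)]
  [IsIsometricSMul G (sphere (0 : E) 1)]

theorem exists_forall_smul_mem_sphericalCap (hx : IsDiscrete (MulAction.orbit G x)) :
    ∃ c ∈ Ico (-1 : ℝ) 1, ∀ g : G, ∀ u ∈ sphericalCap x c, g • u ∈ sphericalCap x c →
      g • x = x := by
  obtain ⟨ε, hε, hball⟩ := exists_ball_inter_eq_singleton_of_mem_discrete hx
    (MulAction.mem_orbit_self x)
  have dist_lt {u : sphere (0 : E) 1} (hu : u ∈ sphericalCap x (max (-1) (1 - ε ^ 2 / 8))) :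
      dist x u < ε / 2 := by
    have hinner : 1 - ε ^ 2 / 8 < ⟪(x : E), u⟫_ℝ := (le_max_right _ _).trans_lt hu
    rw [inner_sphere_eq_one_sub_dist_sq_div_two] at hinner
    exact lt_of_pow_lt_pow_left₀ 2 (by positivity) (by linarith)
  refine ⟨max (-1) (1 - ε ^ 2 / 8), ⟨le_max_left _ _, max_lt (by norm_num) ?_⟩, fun g u hu hgu ↦ ?_⟩
  · linarith [sq_pos_of_pos hε]
  · have hgx : g • x ∈ ball x ε := by
      calc dist (g • x) x ≤ dist (g • x) (g • u) + dist x (g • u) := dist_triangle_right _ _ _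
        _ < ε / 2 + ε / 2 := by
          rw [dist_smul]
          exact add_lt_add (dist_lt hu) (dist_lt hgu)
        _ = ε := add_halves ε
    exact hball.subset ⟨hgx, MulAction.mem_orbit x g⟩

theorem contractibleSpace_orbitMap_image_sphericalCap (hc : c ∈ Ico (-1) 1)
    (hfix : ∀ g : G, ∀ u ∈ sphericalCap x c, g • u ∈ sphericalCap x c → g • x = x) :
    ContractibleSpace (orbitMap G (sphere (0 : E) 1) '' sphericalCap x c) := by
  have hopen : IsOpenMap ((sphericalCap x c).imageFactorization (orbitMap G _)) :=
    (isOpenQuotientMap_orbitMap.isOpenMap.domRestrict (isOpen_sphericalCap x c)).subtype_mk _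
  have hquot : IsQuotientMap ((sphericalCap x c).imageFactorization (orbitMap G _)) :=
    hopen.isQuotientMap (by unfold imageFactorization; fun_prop) imageFactorization_surjective
  refine contractibleSpace_of_isQuotientMap hquot (sphericalCapContraction x hc)
    fun t u u' huu' ↦ Subtype.ext ?_
  obtain ⟨g, hg⟩ := orbitMap_eq_orbitMap_iff.1 (congrArg Subtype.val huu')
  have hgx : g • x = x := hfix g u' u'.2 (hg ▸ u.2)
  exact orbitMap_eq_orbitMap_iff.2
    ⟨g, map_sphericalCapContraction_of_isometry (isometry_smul _ g) hgx hc hg t⟩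

theorem stmt_6_general (hE : 2 < Module.rank ℝ E)
    (horbit : ∀ x : sphere (0 : E) 1, IsDiscrete (MulAction.orbit G x))
    (hgen : Subgroup.closure {g : G | ∃ x : sphere (0 : E) 1, g • x = x} = ⊤) :
    SimplyConnectedSpace (Quotient (MulAction.orbitRel G (sphere (0 : E) 1))) := by
  have := simplyConnectedSpace_sphere hE
  refine simplyConnectedSpace_quotient_orbitRel (fun x ↦ ?_) hgen
  obtain ⟨c, hc, hfix⟩ := exists_forall_smul_mem_sphericalCap (horbit x)
  have := contractibleSpace_orbitMap_image_sphericalCap hc hfix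
  exact ⟨sphericalCap x c, (isOpen_sphericalCap x c).mem_nhds (mem_sphericalCap_self hc.2),
    (isSimplyConnected_sphericalCap hc).isPathConnected, SimplyConnectedSpace.ofContractible _⟩

end Sphere

theorem isDiscrete_orbit_of_finite {G X : Type*} [Group G] [Finite G] [MulAction G X]
    [TopologicalSpace X] [T1Space X] (x : X) : IsDiscrete (MulAction.orbit G x) :=
  (Set.finite_range _).isDiscrete

theorem closure_coe_preimage_eq_top_of_closure_eq {G : Type*} [Group G] {H : Subgroup G}
    {s : Set G} (hs : Subgroup.closure s = H) :
    Subgroup.closure ((↑) ⁻¹' s : Set H) = ⊤ := by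
  subst hs
  exact Subgroup.closure_closure_coe_preimage

section Orthogonal

variable {n : ℕ}

instance : IsIsometricSMul (Orth n) (sphere (0 : Euc n) 1) :=
  ⟨fun g ↦ Isometry.of_dist_eq fun x y ↦ g.dist_map x y⟩

instance (G : Subgroup (Orth n)) : IsIsometricSMul G (sphere (0 : Euc n) 1) :=
  ⟨fun g ↦ isometry_smul _ (g : Orth n)⟩

theorem exists_mem_sphere_smul_eq_self {g : Orth n} {v : Euc n} (hv : v ≠ 0) (hgv : g v = v) :
    ∃ x : sphere (0 : Euc n) 1, g • x = x := by
  refine ⟨⟨NormedSpace.normalize v, by simpa using hv⟩, Subtype.ext ?_⟩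
  exact (g.map_smul _ v).trans (congrArg _ hgv)

theorem closure_exists_mem_sphere_smul_eq_self_eq_top {G : Subgroup (Orth n)}
    (hgen : Subgroup.closure {g : Orth n | g ∈ G ∧ ∃ v : Euc n, v ≠ 0 ∧ g v = v} = G) :
    Subgroup.closure {g : G | ∃ x : sphere (0 : Euc n) 1, g • x = x} = ⊤ := by
  rw [← top_le_iff, ← closure_coe_preimage_eq_top_of_closure_eq hgen]
  exact Subgroup.closure_mono fun g ⟨_, v, hv, hgv⟩ ↦ exists_mem_sphere_smul_eq_self hv hgv

end Orthogonal

/-- If `n ≥ 3` and `G ≤ SO(n)` is a finite subgroup generated by elements each of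
which has a nonzero fixed vector, then `S^{n-1}/G` is simply connected. -/
theorem stmt_6 (n : ℕ) (hn : 3 ≤ n) (G : Subgroup (Orth n)) [Finite G]
    (hdet : ∀ g ∈ G, LinearMap.det ((g : Orth n).toLinearEquiv : Euc n →ₗ[ℝ] Euc n) = 1)
    (hgen : Subgroup.closure {g : Orth n | g ∈ G ∧ ∃ v : Euc n, v ≠ 0 ∧ g v = v} = G) :
    SimplyConnectedSpace (Quotient (MulAction.orbitRel G (sphere (0 : Euc n) 1))) := by
  have hrank : 2 < Module.rank ℝ (Euc n) := by
    simpa [← Module.finrank_eq_rank] using Nat.lt_of_succ_le hn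
  exact stmt_6_general hrank isDiscrete_orbit_of_finite
    (closure_exists_mem_sphere_smul_eq_self_eq_top hgen)
end
end

section
/- Let n ≥ 1, let W be a finite subgroup of O(n) generated by reflections, and let W⁺ = W ∩ SO(n) be its orientation-preserving subgroup. Then the orbit space ℝⁿ/W⁺, equipped with the quotient topology, is homeomorphic to ℝⁿ. -/
open Metric

noncomputable section

/-!
The closed Weyl chamber is a strict fundamental domain for `W`. Dividing out only `W⁺` leaves two
copies of it, one for each orientation, glued along the boundary. Sliding along the lines parallel
to an interior point `p` straightens the chamber to the half-space `{y | 0 ≤ ⟪p, y⟫}`, and the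
double of a half-space along its boundary is the whole space.
-/

open scoped RealInnerProductSpace Pointwise
open Topology

section HyperplaneReflection

variable {E : Type*} [NormedAddCommGroup E] [InnerProductSpace ℝ E]

lemma inner_apply_eq_inner_inv_apply (w : E ≃ₗᵢ[ℝ] E) (x y : E) : ⟪x, w y⟫ = ⟪w⁻¹ x, y⟫ := by
  rw [real_inner_comm, LinearIsometryEquiv.inner_map_eq_flip, real_inner_comm]
  rfl

/-- The orthogonal reflection in the hyperplane normal to `a`; the identity if `a = 0`. -/
def hyperplaneReflection (a : E) : E ≃ₗᵢ[ℝ] E := (ℝ ∙ a)ᗮ.reflection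

lemma hyperplaneReflection_apply (a x : E) :
    hyperplaneReflection a x = x - (2 * (⟪a, x⟫ / ‖a‖ ^ 2)) • a := by
  rw [hyperplaneReflection, Submodule.reflection_orthogonal_apply,
    Submodule.reflection_singleton_apply, neg_sub, two_mul, add_smul, two_smul]
  rfl

lemma hyperplaneReflection_apply_of_norm_eq_one {a : E} (ha : ‖a‖ = 1) (x : E) :
    hyperplaneReflection a x = x - (2 * ⟪a, x⟫) • a := by
  rw [hyperplaneReflection_apply, ha, one_pow, div_one]

lemma hyperplaneReflection_self (a : E) : hyperplaneReflection a a = -a :=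
  Submodule.reflection_orthogonalComplement_singleton_eq_neg a

lemma hyperplaneReflection_apply_of_inner_eq_zero {a x : E} (h : ⟪a, x⟫ = 0) :
    hyperplaneReflection a x = x :=
  Submodule.reflection_mem_subspace_eq_self
    (Submodule.mem_orthogonal_singleton_iff_inner_right.2 h)

@[simp]
lemma hyperplaneReflection_hyperplaneReflection (a x : E) :
    hyperplaneReflection a (hyperplaneReflection a x) = x :=
  Submodule.reflection_reflection _ _

lemma hyperplaneReflection_mul_self (a : E) :
    hyperplaneReflection a * hyperplaneReflection a = 1 :=
  Submodule.reflection_mul_reflection _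

lemma inner_hyperplaneReflection_left (a x y : E) :
    ⟪hyperplaneReflection a x, y⟫ = ⟪x, hyperplaneReflection a y⟫ := by
  rw [LinearIsometryEquiv.inner_map_eq_flip, hyperplaneReflection, Submodule.reflection_symm]

lemma inner_self_hyperplaneReflection (a x : E) : ⟪a, hyperplaneReflection a x⟫ = -⟪a, x⟫ := by
  rw [← inner_hyperplaneReflection_left, hyperplaneReflection_self, inner_neg_left]

lemma hyperplaneReflection_smul {c : ℝ} (hc : c ≠ 0) (a : E) :
    hyperplaneReflection (c • a) = hyperplaneReflection a := by
  simp only [hyperplaneReflection, Submodule.span_singleton_smul_eq hc.isUnit]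

lemma hyperplaneReflection_neg (a : E) : hyperplaneReflection (-a) = hyperplaneReflection a := by
  rw [← neg_one_smul ℝ a, hyperplaneReflection_smul (neg_ne_zero.2 one_ne_zero)]

lemma hyperplaneReflection_map (g : E ≃ₗᵢ[ℝ] E) (a : E) :
    hyperplaneReflection (g a) = g * hyperplaneReflection a * g⁻¹ := by
  ext x
  obtain ⟨y, rfl⟩ := g.surjective x
  have hy : g⁻¹ (g y) = y := g.symm_apply_apply y
  rw [LinearIsometryEquiv.coe_mul, LinearIsometryEquiv.coe_mul, Function.comp_apply,
    Function.comp_apply, hy, hyperplaneReflection_apply, hyperplaneReflection_apply,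
    g.inner_map_map, g.norm_map, map_sub, map_smul]

lemma hyperplaneReflection_mul_eq (a b : E) :
    hyperplaneReflection b * hyperplaneReflection a =
      hyperplaneReflection a * hyperplaneReflection (hyperplaneReflection a b) := by
  rw [hyperplaneReflection_map, ← mul_assoc, ← mul_assoc, hyperplaneReflection_mul_self,
    one_mul, inv_eq_of_mul_eq_one_left (hyperplaneReflection_mul_self a)]

lemma eq_or_eq_neg_of_hyperplaneReflection_eq {a b : E} (ha : ‖a‖ = 1) (hb : ‖b‖ = 1)
    (h : hyperplaneReflection a = hyperplaneReflection b) : b = a ∨ b = -a := by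
  have hba : b = ⟪a, b⟫ • a := by
    have h' := DFunLike.congr_fun h b
    rw [hyperplaneReflection_self, hyperplaneReflection_apply_of_norm_eq_one ha, mul_smul,
      two_smul] at h'
    linear_combination (norm := module) (1 / 2 : ℝ) • h'
  have habs : |⟪a, b⟫| = 1 := by
    simpa [norm_smul, ha, hb] using (congrArg norm hba).symm
  rcases eq_or_eq_neg_of_abs_eq habs with h1 | h1 <;> rw [h1] at hba
  · exact .inl (by simpa using hba)
  · exact .inr (by simpa using hba)

/-- An isometry `g` moving `v` agrees on its fixed space and at `v` with the reflection
in the hyperplane normal to `v - g v`. -/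
lemma exists_eq_hyperplaneReflection_of_finrank_ker [FiniteDimensional ℝ E] (g : E ≃ₗᵢ[ℝ] E)
    (hg : Module.finrank ℝ (LinearMap.ker ((g.toLinearEquiv : E →ₗ[ℝ] E) - LinearMap.id)) + 1 =
      Module.finrank ℝ E) :
    ∃ a : E, ‖a‖ = 1 ∧ g = hyperplaneReflection a := by
  set K := LinearMap.ker ((g.toLinearEquiv : E →ₗ[ℝ] E) - LinearMap.id)
  have mem_K {x : E} : x ∈ K ↔ g x = x := by simp [K, sub_eq_zero]
  obtain ⟨v, hv⟩ : ∃ v, v ∉ K := by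
    by_contra! h
    rw [(Submodule.eq_top_iff').2 h, finrank_top] at hg
    lia
  set u := v - g v
  have hu : u ≠ 0 := sub_ne_zero.2 fun h => hv (mem_K.2 h.symm)
  set r := hyperplaneReflection u
  have hrv : r v = g v := Submodule.reflection_sub (g.norm_map v).symm
  have hrK : ∀ x ∈ K, r x = x := fun x hx =>
    hyperplaneReflection_apply_of_inner_eq_zero <| by
      rw [inner_sub_left, sub_eq_zero]
      nth_rw 2 [← mem_K.1 hx]
      exact (g.inner_map_map v x).symm
  have hlt : K < LinearMap.eqLocus g.toLinearEquiv.toLinearMap r.toLinearEquiv.toLinearMap := by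
    refine SetLike.lt_iff_le_and_exists.2 ⟨fun x hx => ?_, v, hrv.symm, hv⟩
    exact (mem_K.1 hx).trans (hrK x hx).symm
  have htop : LinearMap.eqLocus g.toLinearEquiv.toLinearMap r.toLinearEquiv.toLinearMap = ⊤ :=
    Submodule.eq_top_of_finrank_eq <| le_antisymm (Submodule.finrank_le _) <|
      hg ▸ Submodule.finrank_lt_finrank_of_lt hlt
  refine ⟨‖u‖⁻¹ • u, norm_smul_inv_norm (𝕜 := ℝ) hu, ?_⟩
  rw [hyperplaneReflection_smul (inv_ne_zero (norm_ne_zero_iff.2 hu))]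
  ext x
  exact (LinearMap.mem_eqLocus (f := g.toLinearEquiv.toLinearMap)).1 (htop ▸ Submodule.mem_top)

end HyperplaneReflection

section IsometryDet

variable {E : Type*} [NormedAddCommGroup E] [InnerProductSpace ℝ E]

/-- The determinant as a homomorphism on the orthogonal group; its kernel is the group of
orientation-preserving isometries. -/
def isometryDet : (E ≃ₗᵢ[ℝ] E) →* ℝ where
  toFun g := LinearMap.det (g.toLinearEquiv : E →ₗ[ℝ] E)
  map_one' := LinearMap.det_id
  map_mul' _ _ := LinearMap.det_comp _ _

lemma isometryDet_hyperplaneReflection [FiniteDimensional ℝ E] {a : E} (ha : a ≠ 0) :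
    isometryDet (hyperplaneReflection a) = -1 := by
  have h := Submodule.det_reflection (𝕜 := ℝ) (ℝ ∙ a)ᗮ
  rw [Submodule.orthogonal_orthogonal, finrank_span_singleton ha, pow_one] at h
  exact h

lemma isometryDet_eq_one_or_eq_neg_one [FiniteDimensional ℝ E] (g : E ≃ₗᵢ[ℝ] E) :
    isometryDet g = 1 ∨ isometryDet g = -1 := by
  refine eq_or_eq_neg_of_abs_eq ?_
  have h := g.toLinearIsometry.normDet_eq_one
  rwa [LinearMap.normDet_eq_abs_det] at h

end IsometryDet

section Roots

variable {E : Type*} [NormedAddCommGroup E] [InnerProductSpace ℝ E]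

/-- The unit normals of the mirrors of the reflections in `W`: a normalised root system. -/
def unitRoots (W : Subgroup (E ≃ₗᵢ[ℝ] E)) : Set E := {a | ‖a‖ = 1 ∧ hyperplaneReflection a ∈ W}

/-- `W` is generated by the reflections it contains. -/
def IsReflectionGroup (W : Subgroup (E ≃ₗᵢ[ℝ] E)) : Prop :=
  Subgroup.closure (hyperplaneReflection '' unitRoots W) = W

/-- `p` lies on none of the mirrors of `W`. Such a point selects the positive roots. -/
def IsRegularPoint (W : Subgroup (E ≃ₗᵢ[ℝ] E)) (p : E) : Prop := ∀ a ∈ unitRoots W, ⟪a, p⟫ ≠ 0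

/-- The unit roots on the same side as `p`. -/
def positiveRoots (W : Subgroup (E ≃ₗᵢ[ℝ] E)) (p : E) : Set E := {a ∈ unitRoots W | 0 < ⟪a, p⟫}

/-- The simple roots, defined not as a basis but by the property that is used of them: the
reflection in a simple root permutes the other positive roots. -/
def simpleRoots (W : Subgroup (E ≃ₗᵢ[ℝ] E)) (p : E) : Set E :=
  {a ∈ positiveRoots W p |
    ∀ c ∈ positiveRoots W p, c ≠ a → hyperplaneReflection a c ∈ positiveRoots W p}

/-- The reflections in the simple roots, the Coxeter generators of `W`. -/
def simpleReflections (W : Subgroup (E ≃ₗᵢ[ℝ] E)) (p : E) : Set (E ≃ₗᵢ[ℝ] E) :=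
  hyperplaneReflection '' simpleRoots W p

variable {W : Subgroup (E ≃ₗᵢ[ℝ] E)} {a b p : E} {w : E ≃ₗᵢ[ℝ] E} {k : ℕ}

lemma ne_zero_of_mem_unitRoots (ha : a ∈ unitRoots W) : a ≠ 0 :=
  norm_ne_zero_iff.1 (ha.1.symm ▸ one_ne_zero)

lemma neg_mem_unitRoots (ha : a ∈ unitRoots W) : -a ∈ unitRoots W :=
  ⟨by rw [norm_neg, ha.1], by rw [hyperplaneReflection_neg]; exact ha.2⟩

lemma map_mem_unitRoots (hw : w ∈ W) (ha : a ∈ unitRoots W) : w a ∈ unitRoots W :=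
  ⟨by rw [w.norm_map, ha.1], by
    rw [hyperplaneReflection_map]
    exact W.mul_mem (W.mul_mem hw ha.2) (W.inv_mem hw)⟩

lemma finite_unitRoots (W : Subgroup (E ≃ₗᵢ[ℝ] E)) [Finite W] : (unitRoots W).Finite := by
  refine Set.Finite.of_finite_fibers hyperplaneReflection
    ((Set.toFinite (W : Set (E ≃ₗᵢ[ℝ] E))).subset (Set.image_subset_iff.2 fun _ ha => ha.2)) ?_
  rintro _ ⟨a, ha, rfl⟩
  exact (Set.toFinite {a, -a}).subset fun b hb =>
    eq_or_eq_neg_of_hyperplaneReflection_eq ha.1 hb.1.1 hb.2.symm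

lemma exists_isRegularPoint (W : Subgroup (E ≃ₗᵢ[ℝ] E)) [Finite W] : ∃ p, IsRegularPoint W p := by
  have := (finite_unitRoots W).to_subtype
  obtain ⟨p, hp⟩ := Module.Dual.exists_forall_ne_zero_of_forall_exists
    (fun a : unitRoots W => (innerₗ E (a : E) : Module.Dual ℝ E)) fun a => ⟨a, by simp [a.2.1]⟩
  exact ⟨p, fun a ha => hp ⟨a, ha⟩⟩

lemma finite_positiveRoots (W : Subgroup (E ≃ₗᵢ[ℝ] E)) [Finite W] (p : E) :
    (positiveRoots W p).Finite :=
  (finite_unitRoots W).subset fun _ h => h.1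

lemma mem_positiveRoots_or_neg_mem (hp : IsRegularPoint W p) (ha : a ∈ unitRoots W) :
    a ∈ positiveRoots W p ∨ -a ∈ positiveRoots W p :=
  (hp a ha).lt_or_gt.symm.imp (fun h => ⟨ha, h⟩) fun h =>
    ⟨neg_mem_unitRoots ha, by rwa [inner_neg_left, neg_pos]⟩

lemma lt_and_abs_inner_hyperplaneReflection_lt {c : E} (hc : ‖c‖ = 1) (hbp : 0 < ⟪b, p⟫)
    (hcp : 0 < ⟪c, p⟫) (hbc : ⟪b, c⟫ < 1) (hle : ⟪c, p⟫ ≤ ⟪b, c⟫ * ⟪b, p⟫) :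
    ⟪c, p⟫ < ⟪b, p⟫ ∧ |⟪hyperplaneReflection c b, p⟫| < ⟪b, p⟫ := by
  have hbc_pos : 0 < ⟪b, c⟫ := pos_of_mul_pos_left (hcp.trans_le hle) hbp.le
  refine ⟨by nlinarith, ?_⟩
  rw [hyperplaneReflection_apply_of_norm_eq_one hc, real_inner_comm b c, inner_sub_left,
    real_inner_smul_left, abs_lt]
  constructor <;> nlinarith [mul_pos hbc_pos hcp]

-- If `r_b` sends the positive root `c` to a negative one, then `c` and `d = -r_b c` are positive
-- roots with `c + d = 2⟪b, c⟫ b`, so the lower of the two lies below `b`.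
lemma exists_lower_of_notMem_simpleRoots (hp : IsRegularPoint W p)
    (hb : b ∈ positiveRoots W p) (hb' : b ∉ simpleRoots W p) :
    ∃ c ∈ positiveRoots W p, ⟪c, p⟫ < ⟪b, p⟫ ∧ |⟪hyperplaneReflection c b, p⟫| < ⟪b, p⟫ := by
  obtain ⟨c, hc, hcb, hrc⟩ : ∃ c ∈ positiveRoots W p, c ≠ b ∧
      hyperplaneReflection b c ∉ positiveRoots W p := by
    by_contra! h
    exact hb' ⟨hb, h⟩
  set d := -hyperplaneReflection b c with hd_def
  set t := ⟪b, c⟫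
  have hd : d ∈ positiveRoots W p :=
    (mem_positiveRoots_or_neg_mem hp (map_mem_unitRoots hb.1.2 hc.1)).resolve_left hrc
  have hcd : c + d = (2 * t) • b := by
    rw [hd_def, hyperplaneReflection_apply_of_norm_eq_one hb.1.1]
    abel
  have hbd : ⟪b, d⟫ = t := by
    rw [hd_def, inner_neg_right, inner_self_hyperplaneReflection, neg_neg]
  have ht : t < 1 := (inner_lt_one_iff_real_of_norm_eq_one hb.1.1 hc.1.1).2 hcb.symm
  have hsum : ⟪c, p⟫ + ⟪d, p⟫ = 2 * t * ⟪b, p⟫ := by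
    rw [← inner_add_left, hcd, real_inner_smul_left]
  rcases le_total ⟪c, p⟫ ⟪d, p⟫ with h | h
  · exact ⟨c, hc, lt_and_abs_inner_hyperplaneReflection_lt hc.1.1 hb.2 hc.2 ht (by linarith)⟩
  · exact ⟨d, hd, lt_and_abs_inner_hyperplaneReflection_lt hd.1.1 hb.2 hd.2 (hbd ▸ ht)
      (by rw [hbd]; linarith)⟩

lemma hyperplaneReflection_mem_closure_simpleReflections [Finite W] (hp : IsRegularPoint W p)
    (hb : b ∈ positiveRoots W p) :
    hyperplaneReflection b ∈ Subgroup.closure (simpleReflections W p) := by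
  by_contra hbad
  obtain ⟨b, ⟨hb, hbad⟩, hmin⟩ := Set.exists_min_image
    {b ∈ positiveRoots W p | hyperplaneReflection b ∉ Subgroup.closure (simpleReflections W p)}
    (⟪·, p⟫) ((finite_positiveRoots W p).subset (Set.sep_subset _ _)) ⟨b, hb, hbad⟩
  have mem_of_lower {c : E} (hc : c ∈ positiveRoots W p) (hlt : ⟪c, p⟫ < ⟪b, p⟫) :
      hyperplaneReflection c ∈ Subgroup.closure (simpleReflections W p) := by
    by_contra h
    exact (hmin c ⟨hc, h⟩).not_gt hlt
  have hb' : b ∉ simpleRoots W p := fun h => hbad (Subgroup.subset_closure ⟨b, h, rfl⟩)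
  obtain ⟨c, hc, hcb, hrc⟩ := exists_lower_of_notMem_simpleRoots hp hb hb'
  have hrc_mem : hyperplaneReflection (hyperplaneReflection c b) ∈
      Subgroup.closure (simpleReflections W p) := by
    rcases mem_positiveRoots_or_neg_mem hp (map_mem_unitRoots hc.1.2 hb.1) with h | h
    · exact mem_of_lower h (lt_of_abs_lt hrc)
    · rw [← hyperplaneReflection_neg]
      exact mem_of_lower h (by rw [inner_neg_left]; exact neg_lt.1 (abs_lt.1 hrc).1)
  rw [hyperplaneReflection_map, Subgroup.mul_mem_cancel_right _
    (Subgroup.inv_mem _ (mem_of_lower hc hcb)),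
    Subgroup.mul_mem_cancel_left _ (mem_of_lower hc hcb)] at hrc_mem
  exact hbad hrc_mem

lemma exists_mem_simpleReflections_pow [Finite W] (hW : IsReflectionGroup W)
    (hp : IsRegularPoint W p) (hw : w ∈ W) : ∃ k, w ∈ simpleReflections W p ^ k := by
  have hle : W ≤ Subgroup.closure (simpleReflections W p) := by
    nth_rw 1 [← hW]
    rw [Subgroup.closure_le, Set.image_subset_iff]
    intro a ha
    rcases mem_positiveRoots_or_neg_mem hp ha with h | h
    · exact hyperplaneReflection_mem_closure_simpleReflections hp h
    · rw [Set.mem_preimage, ← hyperplaneReflection_neg]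
      exact hyperplaneReflection_mem_closure_simpleReflections hp h
  have mul_left {s v} (hs : s ∈ simpleReflections W p)
      (hv : ∃ k, v ∈ simpleReflections W p ^ k) : ∃ k, s * v ∈ simpleReflections W p ^ k := by
    obtain ⟨k, hv⟩ := hv
    exact ⟨k + 1, pow_succ' (simpleReflections W p) k ▸ Set.mul_mem_mul hs hv⟩
  replace hw := hle hw
  induction hw using Subgroup.closure_induction_left with
  | one => exact ⟨0, by simp⟩
  | mul_left s hs v _ ih => exact mul_left hs ih
  | inv_mul_cancel s hs v _ ih =>
    obtain ⟨a, _, rfl⟩ := id hs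
    rw [inv_eq_of_mul_eq_one_left (hyperplaneReflection_mul_self a)]
    exact mul_left hs ih

lemma exists_mul_mem_simpleReflections_pow_of_inner_neg (hw : w ∈ simpleReflections W p ^ k)
    (hb : b ∈ positiveRoots W p) (hneg : ⟪b, w p⟫ < 0) :
    ∃ j < k, hyperplaneReflection b * w ∈ simpleReflections W p ^ j := by
  induction k generalizing w b with
  | zero =>
    obtain rfl : w = 1 := by simpa using hw
    exact absurd hb.2 hneg.not_gt
  | succ k ih =>
    rw [pow_succ', Set.mem_mul] at hw
    obtain ⟨_, ⟨a, ha, rfl⟩, v, hv, rfl⟩ := hw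
    by_cases hba : b = a
    · refine ⟨k, k.lt_succ_self, ?_⟩
      rwa [hba, ← mul_assoc, hyperplaneReflection_mul_self, one_mul]
    · have hneg' : ⟪hyperplaneReflection a b, v p⟫ < 0 := by
        rwa [inner_hyperplaneReflection_left]
      obtain ⟨j, hj, hmem⟩ := ih hv (ha.2 b hb hba) hneg'
      refine ⟨j + 1, Nat.succ_lt_succ hj, ?_⟩
      rw [← mul_assoc, hyperplaneReflection_mul_eq, mul_assoc, pow_succ']
      exact Set.mul_mem_mul ⟨a, ha, rfl⟩ hmem

lemma eq_one_of_mem_simpleReflections_pow (hw : w ∈ simpleReflections W p ^ k)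
    (hpos : ∀ a ∈ positiveRoots W p, 0 < ⟪a, w p⟫) : w = 1 := by
  induction k using Nat.strong_induction_on generalizing w with
  | _ k ih =>
    rcases k with _ | k
    · simpa using hw
    · rw [pow_succ', Set.mem_mul] at hw
      obtain ⟨_, ⟨a, ha, rfl⟩, v, hv, rfl⟩ := hw
      have hneg : ⟪a, v p⟫ < 0 :=
        neg_pos.1 (inner_self_hyperplaneReflection a (v p) ▸ hpos a ha.1)
      obtain ⟨j, hj, hmem⟩ := exists_mul_mem_simpleReflections_pow_of_inner_neg hv ha.1 hneg
      exact ih j (hj.trans k.lt_succ_self) hmem hpos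

lemma exists_positiveRoot_inner_neg [Finite W] (hW : IsReflectionGroup W)
    (hp : IsRegularPoint W p) (hw : w ∈ W) (hw1 : w ≠ 1) :
    ∃ a ∈ positiveRoots W p, ⟪a, w p⟫ < 0 := by
  obtain ⟨k, hk⟩ := exists_mem_simpleReflections_pow hW hp hw
  by_contra! hnonneg
  refine hw1 (eq_one_of_mem_simpleReflections_pow hk fun a ha => (hnonneg a ha).lt_of_ne' ?_)
  rw [inner_apply_eq_inner_inv_apply]
  exact hp _ (map_mem_unitRoots (W.inv_mem hw) ha.1)

end Roots

section Chambers

variable {E : Type*} [NormedAddCommGroup E] [InnerProductSpace ℝ E]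

/-- The closed Weyl chamber containing `p`. -/
def closedChamber (W : Subgroup (E ≃ₗᵢ[ℝ] E)) (p : E) : Set E :=
  {x | ∀ a ∈ positiveRoots W p, 0 ≤ ⟪a, x⟫}

/-- The open Weyl chamber containing `p`. -/
def openChamber (W : Subgroup (E ≃ₗᵢ[ℝ] E)) (p : E) : Set E :=
  {x | ∀ a ∈ positiveRoots W p, 0 < ⟪a, x⟫}

variable {W : Subgroup (E ≃ₗᵢ[ℝ] E)} {p x : E} {w : E ≃ₗᵢ[ℝ] E}

lemma isClosed_closedChamber (W : Subgroup (E ≃ₗᵢ[ℝ] E)) (p : E) :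
    IsClosed (closedChamber W p) := by
  simp only [closedChamber, Set.ofPred_forall]
  exact isClosed_biInter fun a _ => isClosed_le continuous_const (by fun_prop)

lemma exists_map_mem_closedChamber (W : Subgroup (E ≃ₗᵢ[ℝ] E)) [Finite W] (p x : E) :
    ∃ w ∈ W, w x ∈ closedChamber W p := by
  obtain ⟨w, hw, hmax⟩ := Set.exists_max_image (W : Set (E ≃ₗᵢ[ℝ] E)) (fun w => ⟪p, w x⟫)
    (Set.toFinite _) ⟨1, W.one_mem⟩
  refine ⟨w, hw, fun a ha => ?_⟩
  have hle : ⟪p, hyperplaneReflection a (w x)⟫ ≤ ⟪p, w x⟫ :=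
    hmax (hyperplaneReflection a * w) (W.mul_mem ha.1.2 hw)
  rw [hyperplaneReflection_apply_of_norm_eq_one ha.1.1, inner_sub_right, real_inner_smul_right,
    real_inner_comm] at hle
  have := ha.2
  rw [real_inner_comm] at this
  nlinarith

lemma neg_inv_apply_mem_positiveRoots {a : E} (hw : w ∈ W) (ha : a ∈ positiveRoots W p)
    (hneg : ⟪a, w p⟫ < 0) : -(w⁻¹ a) ∈ positiveRoots W p :=
  ⟨neg_mem_unitRoots (map_mem_unitRoots (W.inv_mem hw) ha.1), by
    rwa [inner_neg_left, neg_pos, ← inner_apply_eq_inner_inv_apply]⟩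

lemma eq_one_of_mem_openChamber [Finite W] (hW : IsReflectionGroup W) (hp : IsRegularPoint W p)
    (hw : w ∈ W) (hx : x ∈ openChamber W p) (hwx : w x ∈ closedChamber W p) : w = 1 := by
  by_contra hw1
  obtain ⟨a, ha, hneg⟩ := exists_positiveRoot_inner_neg hW hp hw hw1
  have hpos := hx _ (neg_inv_apply_mem_positiveRoots hw ha hneg)
  rw [inner_neg_left, neg_pos, ← inner_apply_eq_inner_inv_apply] at hpos
  exact hpos.not_ge (hwx a ha)

lemma apply_eq_self_of_mem_closedChamber [Finite W] (hW : IsReflectionGroup W)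
    (hp : IsRegularPoint W p) (hw : w ∈ W) (hx : x ∈ closedChamber W p)
    (hwx : w x ∈ closedChamber W p) : w x = x := by
  obtain ⟨k, hk⟩ := exists_mem_simpleReflections_pow hW hp hw
  induction k using Nat.strong_induction_on generalizing w with
  | _ k ih =>
    by_cases hw1 : w = 1
    · rw [hw1, LinearIsometryEquiv.coe_one, id]
    obtain ⟨a, ha, hneg⟩ := exists_positiveRoot_inner_neg hW hp hw hw1
    have hle := hx _ (neg_inv_apply_mem_positiveRoots hw ha hneg)
    rw [inner_neg_left, neg_nonneg, ← inner_apply_eq_inner_inv_apply] at hle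
    have hfix : hyperplaneReflection a (w x) = w x :=
      hyperplaneReflection_apply_of_inner_eq_zero (hle.antisymm (hwx a ha))
    obtain ⟨j, hj, hmem⟩ := exists_mul_mem_simpleReflections_pow_of_inner_neg hk ha hneg
    have hrw : (hyperplaneReflection a * w) x = w x := hfix
    exact hrw.symm.trans (ih j hj (W.mul_mem ha.1.2 hw) (hrw.symm ▸ hwx) hmem)

end Chambers

section Shear

variable {E : Type*} [AddCommGroup E] [Module ℝ E] [TopologicalSpace E]
  [IsTopologicalAddGroup E] [ContinuousSMul ℝ E]

/-- The homeomorphism of `E` that slides each line parallel to `p` onto itself and carries the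
function `h` to the function `τ`, both of which grow at unit speed along these lines. -/
def shearHomeomorph (p : E) {h τ : E → ℝ} (hh : Continuous h) (hτ : Continuous τ)
    (h_add : ∀ x c, h (x + c • p) = h x + c) (τ_add : ∀ x c, τ (x + c • p) = τ x + c) :
    E ≃ₜ E where
  toFun x := x + (h x - τ x) • p
  invFun x := x + (τ x - h x) • p
  left_inv x := by simp only [h_add, τ_add]; module
  right_inv x := by simp only [h_add, τ_add]; module
  continuous_toFun := by fun_prop
  continuous_invFun := by fun_prop

lemma apply_shearHomeomorph (p : E) {h τ : E → ℝ} (hh : Continuous h) (hτ : Continuous τ)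
    (h_add : ∀ x c, h (x + c • p) = h x + c) (τ_add : ∀ x c, τ (x + c • p) = τ x + c) (x : E) :
    τ (shearHomeomorph p hh hτ h_add τ_add x) = h x := by
  change τ (x + (h x - τ x) • p) = h x
  rw [τ_add]
  ring

lemma exists_homeomorph_polyhedralCone_halfSpace {ι : Type*} {s : Finset ι} (hs : s.Nonempty)
    (f : ι → StrongDual ℝ E) (t : StrongDual ℝ E) {p : E} (hf : ∀ i ∈ s, 0 < f i p)
    (ht : 0 < t p) :
    ∃ Φ : E ≃ₜ E, ∀ x, (0 ≤ t (Φ x) ↔ ∀ i ∈ s, 0 ≤ f i x) ∧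
      (0 < t (Φ x) ↔ ∀ i ∈ s, 0 < f i x) := by
  set h : E → ℝ := fun x => s.inf' hs fun i => f i x / f i p
  set τ : E → ℝ := fun x => t x / t p
  have hh : Continuous h := Continuous.finset_inf'_apply hs fun i _ => by fun_prop
  have hτ : Continuous τ := by fun_prop
  have h_add (x : E) (c : ℝ) : h (x + c • p) = h x + c := by
    have hi : ∀ i ∈ s, f i (x + c • p) / f i p = f i x / f i p + c := fun i hi => by
      have := (hf i hi).ne'
      simp only [map_add, map_smul, smul_eq_mul]
      field_simp
    rw [show h (x + c • p) = _ from Finset.inf'_congr hs rfl hi]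
    exact (Finset.apply_inf'_eq_inf'_comp hs (· + c) fun a b => (min_add_add_right a b c).symm).symm
  have τ_add (x : E) (c : ℝ) : τ (x + c • p) = τ x + c := by
    simp only [τ, map_add, map_smul, smul_eq_mul]
    field_simp
  have hΦ (x : E) : τ (shearHomeomorph p hh hτ h_add τ_add x) = h x := apply_shearHomeomorph ..
  have nonneg_div_iff {r c : ℝ} (hc : 0 < c) : 0 ≤ r / c ↔ 0 ≤ r := by
    rw [le_div_iff₀ hc, zero_mul]
  refine ⟨shearHomeomorph p hh hτ h_add τ_add, fun x => ⟨?_, ?_⟩⟩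
  · rw [← nonneg_div_iff ht]
    change 0 ≤ τ _ ↔ _
    rw [hΦ, Finset.le_inf'_iff]
    exact forall₂_congr fun i hi => nonneg_div_iff (hf i hi)
  · rw [← div_pos_iff_of_pos_right ht]
    change 0 < τ _ ↔ _
    rw [hΦ, Finset.lt_inf'_iff]
    exact forall₂_congr fun i hi => div_pos_iff_of_pos_right (hf i hi)

end Shear

lemma isQuotientMap_of_closed_cover_sections {X Y : Type*} [TopologicalSpace X]
    [TopologicalSpace Y] {f : X → Y} (hf : Continuous f) {A B : Set Y} (hA : IsClosed A)
    (hB : IsClosed B) (hAB : A ∪ B = Set.univ) {σ τ : Y → X} (hσ : Continuous σ)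
    (hτ : Continuous τ) (hfσ : ∀ y ∈ A, f (σ y) = y) (hfτ : ∀ y ∈ B, f (τ y) = y) :
    IsQuotientMap f := by
  have mem_or (y : Y) : y ∈ A ∨ y ∈ B := hAB.ge (Set.mem_univ y)
  refine isQuotientMap_iff_isClosed.2 ⟨fun y => ?_, fun s => ⟨fun hs => hs.preimage hf, ?_⟩⟩
  · exact (mem_or y).elim (fun h => ⟨σ y, hfσ y h⟩) fun h => ⟨τ y, hfτ y h⟩
  · intro hs
    have hsplit : s = A ∩ σ ⁻¹' (f ⁻¹' s) ∪ B ∩ τ ⁻¹' (f ⁻¹' s) := by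
      ext y
      have := mem_or y
      have := hfσ y
      have := hfτ y
      simp only [Set.mem_union, Set.mem_inter_iff, Set.mem_preimage]
      grind
    rw [hsplit]
    exact (hA.inter (hs.preimage hσ)).union (hB.inter (hs.preimage hτ))

section Straightening

variable {E : Type*} [NormedAddCommGroup E] [InnerProductSpace ℝ E]

/-- `Φ` carries the closed chamber of `p` onto the half-space `{y | 0 ≤ ⟪p, y⟫}`, and the open
chamber onto its interior. -/
structure StraightensChamber (W : Subgroup (E ≃ₗᵢ[ℝ] E)) (p : E) (Φ : E ≃ₜ E) : Prop where
  nonneg_iff : ∀ x, 0 ≤ ⟪p, Φ x⟫ ↔ x ∈ closedChamber W p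
  pos_iff : ∀ x, 0 < ⟪p, Φ x⟫ ↔ x ∈ openChamber W p

variable {W : Subgroup (E ≃ₗᵢ[ℝ] E)} {p x y : E} {Φ : E ≃ₜ E}

lemma exists_straightensChamber [Finite W] (hne : (positiveRoots W p).Nonempty) :
    ∃ Φ : E ≃ₜ E, StraightensChamber W p Φ := by
  have hfin := finite_positiveRoots W p
  have hp : 0 < ⟪p, p⟫ := by
    obtain ⟨a, ha⟩ := hne
    rw [real_inner_self_pos]
    rintro rfl
    exact ha.2.ne' (inner_zero_right a)
  obtain ⟨Φ, hΦ⟩ := exists_homeomorph_polyhedralCone_halfSpace (hfin.toFinset_nonempty.2 hne)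
    (innerSL ℝ) (innerSL ℝ p) (p := p) (fun a ha => (hfin.mem_toFinset.1 ha).2) hp
  simp only [innerSL_apply_apply, Set.Finite.mem_toFinset] at hΦ
  exact ⟨Φ, fun x => (hΦ x).1, fun x => (hΦ x).2⟩

lemma StraightensChamber.apply_eq_reflection_iff (hΦ : StraightensChamber W p Φ)
    (hx : x ∈ closedChamber W p) (hy : y ∈ closedChamber W p) :
    Φ x = hyperplaneReflection p (Φ y) ↔ x = y ∧ x ∉ openChamber W p := by
  have hx0 := (hΦ.nonneg_iff x).2 hx
  have hy0 := (hΦ.nonneg_iff y).2 hy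
  rw [← hΦ.pos_iff, not_lt]
  constructor
  · intro h
    have hneg : ⟪p, Φ x⟫ = -⟪p, Φ y⟫ := h ▸ inner_self_hyperplaneReflection p (Φ y)
    rw [hyperplaneReflection_apply_of_inner_eq_zero (by linarith)] at h
    exact ⟨Φ.injective h, by linarith⟩
  · rintro ⟨rfl, h⟩
    exact (hyperplaneReflection_apply_of_inner_eq_zero (h.antisymm hx0)).symm

end Straightening

section OrbitChart

variable {E : Type*} [NormedAddCommGroup E] [InnerProductSpace ℝ E]

/-- The chart `Φ` of the chamber transported to its translate by `g⁻¹`, mirrored into the opposite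
half-space when `g` reverses orientation. -/
def signedChart (p : E) (Φ : E ≃ₜ E) (g : E ≃ₗᵢ[ℝ] E) (x : E) : E :=
  if isometryDet g = 1 then Φ (g x) else hyperplaneReflection p (Φ (g x))

lemma continuous_signedChart (p : E) (Φ : E ≃ₜ E) (g : E ≃ₗᵢ[ℝ] E) :
    Continuous (signedChart p Φ g) := by
  unfold signedChart
  split_ifs <;> fun_prop

/-- The map glued from the signed charts of all chambers. Its fibres are the orbits of the
orientation-preserving subgroup. -/
def orbitChart (W : Subgroup (E ≃ₗᵢ[ℝ] E)) [Finite W] (p : E) (Φ : E ≃ₜ E) (x : E) : E :=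
  signedChart p Φ (exists_map_mem_closedChamber W p x).choose x

variable {W : Subgroup (E ≃ₗᵢ[ℝ] E)} {p x y : E} {Φ : E ≃ₜ E} {v w : E ≃ₗᵢ[ℝ] E}

lemma StraightensChamber.apply_eq_and_of_signedChart_eq (hΦ : StraightensChamber W p Φ)
    (hx : w x ∈ closedChamber W p) (hy : v y ∈ closedChamber W p)
    (h : signedChart p Φ w x = signedChart p Φ v y) :
    w x = v y ∧ ((isometryDet w = 1 ↔ isometryDet v = 1) ∨ w x ∉ openChamber W p) := by
  simp only [signedChart] at h
  split_ifs at h with hw hv hv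
  · exact ⟨Φ.injective h, .inl (iff_of_true hw hv)⟩
  · exact ((hΦ.apply_eq_reflection_iff hx hy).1 h).imp_right .inr
  · obtain ⟨heq, hmem⟩ := (hΦ.apply_eq_reflection_iff hy hx).1 h.symm
    exact ⟨heq.symm, .inr (heq ▸ hmem)⟩
  · exact ⟨Φ.injective (LinearIsometryEquiv.injective _ h), .inl (iff_of_false hw hv)⟩

lemma StraightensChamber.signedChart_eq_signedChart [Finite W] (hΦ : StraightensChamber W p Φ)
    (hW : IsReflectionGroup W) (hp : IsRegularPoint W p) (hw : w ∈ W) (hv : v ∈ W)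
    (hwx : w x ∈ closedChamber W p) (hvx : v x ∈ closedChamber W p) :
    signedChart p Φ w x = signedChart p Φ v x := by
  have hcancel : (v * w⁻¹) (w x) = v x := congrArg v (w.symm_apply_apply x)
  have hvw : v * w⁻¹ ∈ W := W.mul_mem hv (W.inv_mem hw)
  have heq : w x = v x := by
    rw [← hcancel, apply_eq_self_of_mem_closedChamber hW hp hvw hwx (hcancel ▸ hvx)]
  by_cases hopen : w x ∈ openChamber W p
  · rw [mul_inv_eq_one.1 (eq_one_of_mem_openChamber hW hp hvw hopen (hcancel ▸ hvx))]
  · have hfix : Φ (w x) = hyperplaneReflection p (Φ (w x)) :=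
      (hΦ.apply_eq_reflection_iff hwx hwx).2 ⟨rfl, hopen⟩
    simp only [signedChart, ← heq, ← hfix, ite_self]

lemma StraightensChamber.orbitChart_eq [Finite W] (hΦ : StraightensChamber W p Φ)
    (hW : IsReflectionGroup W) (hp : IsRegularPoint W p) (hw : w ∈ W)
    (hwx : w x ∈ closedChamber W p) : orbitChart W p Φ x = signedChart p Φ w x :=
  have hchoose := (exists_map_mem_closedChamber W p x).choose_spec
  hΦ.signedChart_eq_signedChart hW hp hchoose.1 hw hchoose.2 hwx

lemma StraightensChamber.continuous_orbitChart [Finite W] (hΦ : StraightensChamber W p Φ)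
    (hW : IsReflectionGroup W) (hp : IsRegularPoint W p) : Continuous (orbitChart W p Φ) := by
  let chamber (w : W) : Set E := {x | w.1 x ∈ closedChamber W p}
  refine (locallyFinite_of_finite chamber).continuous ?_ (fun w => ?_) fun w => ?_
  · refine Set.iUnion_eq_univ_iff.2 fun x => ?_
    obtain ⟨w, hw, hwx⟩ := exists_map_mem_closedChamber W p x
    exact ⟨⟨w, hw⟩, hwx⟩
  · exact (isClosed_closedChamber W p).preimage w.1.continuous
  · exact (continuous_signedChart p Φ w.1).continuousOn.congr fun x hx =>
      hΦ.orbitChart_eq hW hp w.2 hx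

lemma exists_map_eq_of_notMem_openChamber [FiniteDimensional ℝ E] (hv : v ∈ W)
    (hvy : v y ∈ closedChamber W p) (hvy' : v y ∉ openChamber W p) :
    ∃ u ∈ W, u y = v y ∧ isometryDet u = -isometryDet v := by
  obtain ⟨a, ha, hle⟩ : ∃ a ∈ positiveRoots W p, ⟪a, v y⟫ ≤ 0 := by
    simpa [openChamber] using hvy'
  refine ⟨hyperplaneReflection a * v, W.mul_mem ha.1.2 hv,
    hyperplaneReflection_apply_of_inner_eq_zero (hle.antisymm (hvy a ha)), ?_⟩
  rw [map_mul, isometryDet_hyperplaneReflection (ne_zero_of_mem_unitRoots ha.1), neg_one_mul]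

lemma StraightensChamber.exists_apply_eq_of_signedChart_eq [FiniteDimensional ℝ E]
    (hΦ : StraightensChamber W p Φ) (hv : v ∈ W) (hx : w x ∈ closedChamber W p)
    (hy : v y ∈ closedChamber W p) (h : signedChart p Φ w x = signedChart p Φ v y) :
    ∃ u ∈ W, u y = w x ∧ isometryDet u = isometryDet w := by
  obtain ⟨heq, hdet⟩ := hΦ.apply_eq_and_of_signedChart_eq hx hy h
  by_cases hwv : isometryDet w = isometryDet v
  · exact ⟨v, hv, heq.symm, hwv.symm⟩
  have hopp : isometryDet w = -isometryDet v ∧ ¬(isometryDet w = 1 ↔ isometryDet v = 1) := by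
    rcases isometryDet_eq_one_or_eq_neg_one w with hw | hw <;>
      rcases isometryDet_eq_one_or_eq_neg_one v with hv | hv <;>
      simp only [hw, hv, not_true_eq_false] at hwv ⊢ <;> norm_num
  obtain ⟨u, hu, huy, hdetu⟩ :=
    exists_map_eq_of_notMem_openChamber hv hy (heq ▸ hdet.resolve_left hopp.2)
  exact ⟨u, hu, huy.trans heq.symm, hdetu.trans hopp.1.symm⟩

lemma StraightensChamber.orbitChart_eq_orbitChart_iff [FiniteDimensional ℝ E] [Finite W]
    (hΦ : StraightensChamber W p Φ) (hW : IsReflectionGroup W) (hp : IsRegularPoint W p) :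
    orbitChart W p Φ x = orbitChart W p Φ y ↔ ∃ g ∈ W ⊓ isometryDet.ker, g y = x := by
  obtain ⟨w, hw, hwx⟩ := exists_map_mem_closedChamber W p x
  rw [hΦ.orbitChart_eq hW hp hw hwx]
  constructor
  · intro h
    obtain ⟨v, hv, hvy⟩ := exists_map_mem_closedChamber W p y
    rw [hΦ.orbitChart_eq hW hp hv hvy] at h
    obtain ⟨u, hu, huy, hdet⟩ := hΦ.exists_apply_eq_of_signedChart_eq hv hwx hvy h
    refine ⟨w⁻¹ * u, ⟨W.mul_mem (W.inv_mem hw) hu, ?_⟩, ?_⟩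
    · exact (MonoidHom.eq_iff isometryDet).1 hdet
    · exact (congrArg w.symm huy).trans (w.symm_apply_apply x)
  · rintro ⟨g, ⟨hg, hdet⟩, rfl⟩
    rw [hΦ.orbitChart_eq hW hp (W.mul_mem hw hg) hwx]
    simp only [signedChart, map_mul, MonoidHom.mem_ker.1 hdet, mul_one]
    rfl

lemma StraightensChamber.isQuotientMap_orbitChart [FiniteDimensional ℝ E] [Finite W]
    (hΦ : StraightensChamber W p Φ) (hW : IsReflectionGroup W) (hp : IsRegularPoint W p)
    (hne : (positiveRoots W p).Nonempty) : IsQuotientMap (orbitChart W p Φ) := by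
  obtain ⟨a, ha⟩ := hne
  have symm_mem {y : E} (hy : 0 ≤ ⟪p, y⟫) : Φ.symm y ∈ closedChamber W p := by
    rwa [← hΦ.nonneg_iff, Φ.apply_symm_apply]
  refine isQuotientMap_of_closed_cover_sections (hΦ.continuous_orbitChart hW hp)
    (A := {y | 0 ≤ ⟪p, y⟫}) (B := {y | ⟪p, y⟫ ≤ 0}) (σ := Φ.symm)
    (τ := fun y => hyperplaneReflection a (Φ.symm (hyperplaneReflection p y)))
    (isClosed_le continuous_const (by fun_prop)) (isClosed_le (by fun_prop) continuous_const)
    (Set.eq_univ_of_forall fun y => le_total 0 ⟪p, y⟫) Φ.symm.continuous (by fun_prop) ?_ ?_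
  · intro y hy
    rw [hΦ.orbitChart_eq hW hp W.one_mem (x := Φ.symm y) (symm_mem hy), signedChart,
      if_pos (map_one _)]
    exact Φ.apply_symm_apply y
  · intro y hy
    have hmem : Φ.symm (hyperplaneReflection p y) ∈ closedChamber W p :=
      symm_mem (by rw [inner_self_hyperplaneReflection]; exact neg_nonneg.2 hy)
    rw [hΦ.orbitChart_eq hW hp ha.1.2 (by rwa [hyperplaneReflection_hyperplaneReflection]),
      signedChart, isometryDet_hyperplaneReflection (ne_zero_of_mem_unitRoots ha.1),
      if_neg (by norm_num), hyperplaneReflection_hyperplaneReflection, Φ.apply_symm_apply,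
      hyperplaneReflection_hyperplaneReflection]

end OrbitChart

section OrbitSpace

variable {E : Type*} [NormedAddCommGroup E] [InnerProductSpace ℝ E]

/-- The orbit relation of a group of linear isometries; the analogue of `MulAction.orbitRel` for
`E ≃ₗᵢ[ℝ] E`, whose action on `E` is not registered as a `MulAction`. -/
def isometryOrbitRel (G : Subgroup (E ≃ₗᵢ[ℝ] E)) : Setoid E where
  r x y := ∃ g ∈ G, g y = x
  iseqv :=
    { refl := fun _ => ⟨1, G.one_mem, rfl⟩
      symm := by
        rintro _ y ⟨g, hg, rfl⟩
        exact ⟨g⁻¹, G.inv_mem hg, g.symm_apply_apply y⟩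
      trans := by
        rintro _ _ z ⟨g, hg, rfl⟩ ⟨h, hh, rfl⟩
        exact ⟨g * h, G.mul_mem hg hh, rfl⟩ }

lemma isometryOrbitRel_bot : isometryOrbitRel (⊥ : Subgroup (E ≃ₗᵢ[ℝ] E)) = ⊥ := by
  ext x y
  change (∃ g ∈ (⊥ : Subgroup (E ≃ₗᵢ[ℝ] E)), g y = x) ↔ x = y
  simp [eq_comm]

lemma eq_bot_of_positiveRoots_eq_empty {W : Subgroup (E ≃ₗᵢ[ℝ] E)} {p : E}
    (hW : IsReflectionGroup W) (hp : IsRegularPoint W p) (h : positiveRoots W p = ∅) : W = ⊥ := by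
  have hroots : unitRoots W = ∅ := Set.eq_empty_of_forall_notMem fun a ha => by
    simpa [h] using mem_positiveRoots_or_neg_mem hp ha
  rw [← hW, hroots, Set.image_empty, Subgroup.closure_empty]

theorem stmt_19_general [FiniteDimensional ℝ E] (W : Subgroup (E ≃ₗᵢ[ℝ] E)) [Finite W]
    (hW : IsReflectionGroup W) :
    Nonempty (Quotient (isometryOrbitRel (W ⊓ isometryDet.ker)) ≃ₜ E) := by
  obtain ⟨p, hp⟩ := exists_isRegularPoint W
  rcases (positiveRoots W p).eq_empty_or_nonempty with hempty | hne
  · rw [eq_bot_of_positiveRoots_eq_empty hW hp hempty, bot_inf_eq, isometryOrbitRel_bot]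
    exact ⟨Homeomorph.quotientBot⟩
  · obtain ⟨Φ, hΦ⟩ := exists_straightensChamber hne
    let F : C(E, E) := ⟨orbitChart W p Φ, hΦ.continuous_orbitChart hW hp⟩
    have hker : isometryOrbitRel (W ⊓ isometryDet.ker) = Setoid.ker F :=
      Setoid.ext fun x y => (hΦ.orbitChart_eq_orbitChart_iff hW hp).symm
    rw [hker]
    exact ⟨IsQuotientMap.homeomorph (f := F) (hΦ.isQuotientMap_orbitChart hW hp hne)⟩

end OrbitSpace

lemma orbitRel_eq_isometryOrbitRel {n : ℕ} (G : Subgroup (Orth n)) :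
    MulAction.orbitRel G (Euc n) = isometryOrbitRel G := by
  ext x y
  rw [MulAction.orbitRel_apply, MulAction.mem_orbit_iff]
  exact ⟨fun ⟨g, h⟩ => ⟨g.1, g.2, h⟩, fun ⟨g, hg, h⟩ => ⟨⟨g, hg⟩, h⟩⟩

lemma isReflectionGroup_of_closure_isReflection {n : ℕ} {W : Subgroup (Orth n)}
    (hgen : Subgroup.closure {g : Orth n | g ∈ W ∧ IsReflection g} = W) :
    IsReflectionGroup W := by
  refine le_antisymm ((Subgroup.closure_le W).2 (Set.image_subset_iff.2 fun a ha => ha.2)) ?_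
  nth_rw 1 [← hgen]
  refine Subgroup.closure_mono ?_
  rintro g ⟨hg, hrefl⟩
  obtain ⟨a, ha, rfl⟩ := exists_eq_hyperplaneReflection_of_finrank_ker g
    (hrefl.trans finrank_euclideanSpace_fin.symm)
  exact ⟨a, ⟨ha, hg⟩, rfl⟩

/-- If `W ≤ O(n)` (`n ≥ 1`) is a finite reflection group and `W⁺ = W ∩ SO(n)` is
its orientation-preserving subgroup, then `ℝⁿ/W⁺` with the quotient topology is
homeomorphic to `ℝⁿ`. -/
theorem stmt_19 (n : ℕ) (hn : 1 ≤ n) (W Wplus : Subgroup (Orth n)) [Finite W]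
    (hgen : Subgroup.closure {g : Orth n | g ∈ W ∧ IsReflection g} = W)
    (hplus : ∀ g : Orth n, g ∈ Wplus ↔ g ∈ W ∧
      LinearMap.det (g.toLinearEquiv : Euc n →ₗ[ℝ] Euc n) = 1) :
    Nonempty (Quotient (MulAction.orbitRel Wplus (Euc n)) ≃ₜ Euc n) := by
  obtain rfl : Wplus = W ⊓ isometryDet.ker := Subgroup.ext hplus
  rw [orbitRel_eq_isometryOrbitRel]
  exact stmt_19_general W (isReflectionGroup_of_closure_isReflection hgen)
end
end
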